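/- Let ρ(x) = Ai'(x)² − x·Ai(x)². There is C > 0 such that for every x ≥ 1: ρ(x) ≤ C·e^{−(4/3)·x^{3/2}}, and |ρ(−x) − √x/π| ≤ C·x^{−1}. -/

import Mathlib

open MeasureTheory Filter Set

noncomputable section

/-- The Airy function `Ai(x) = (1/π)·lim_{b→∞} ∫_0^b cos(t³/3 + x·t) dt`. -/
def Ai (x : ℝ) : ℝ :=
  (1 / Real.pi) *
    limUnder Filter.atTop (fun b : ℝ => ∫ t in (0:ℝ)..b, Real.cos (t ^ 3 / 3 + x * t))

/-- The Airy kernel. -/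
def KAi (x y : ℝ) : ℝ :=
  if x = y then (deriv Ai x) ^ 2 - x * (Ai x) ^ 2
  else (Ai x * deriv Ai y - deriv Ai x * Ai y) / (x - y)

/-- One-point correlation function of the Airy₂ random point field. -/
def rho (x : ℝ) : ℝ := (deriv Ai x) ^ 2 - x * (Ai x) ^ 2

/-- Probabilists' Hermite polynomial `Ĥ_m(x) = (−1)^m e^{x²/2} (d/dx)^m e^{−x²/2}`. -/
def hermiteP (m : ℕ) (x : ℝ) : ℝ :=
  (-1 : ℝ) ^ m * Real.exp (x ^ 2 / 2) * iteratedDeriv m (fun t => Real.exp (-t ^ 2 / 2)) x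

/-- Normalized oscillator function `φ_m`. -/
def osc (m : ℕ) (x : ℝ) : ℝ :=
  (2 * Real.pi) ^ (-(1:ℝ)/4) * ((m.factorial : ℝ)) ^ (-(1:ℝ)/2) *
    Real.exp (-x ^ 2 / 4) * hermiteP m x

/-- `ψ_mⁿ(x) = n^{1/12}·φ_m(2√n + n^{−1/6}·x)`. -/
def psiUp (n m : ℕ) (x : ℝ) : ℝ :=
  (n : ℝ) ^ ((1:ℝ)/12) * osc m (2 * Real.sqrt n + (n : ℝ) ^ (-(1:ℝ)/6) * x)

/-- `ψ_n = ψ_nⁿ`. -/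
def psiN (n : ℕ) : ℝ → ℝ := psiUp n n

/-- The finite-`n` Airy kernel. -/
def KAiN (n : ℕ) (x y : ℝ) : ℝ :=
  if x = y then
    (deriv (psiN n) x) ^ 2 - psiN n x * deriv (deriv (psiN n)) x
      - (1 / (2 * (n : ℝ) ^ ((1:ℝ)/3))) * (psiN n x) ^ 2
  else
    (psiN n x * deriv (psiN n) y - deriv (psiN n) x * psiN n y) / (x - y)
      - (1 / (2 * (n : ℝ) ^ ((1:ℝ)/3))) * (psiN n x * psiN n y)

/-- `(εf)(x) = (1/2)·∫_ℝ sign(x − y)·f(y) dy`. -/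
def epsF (f : ℝ → ℝ) (x : ℝ) : ℝ := (1/2) * ∫ y : ℝ, Real.sign (x - y) * f y

/-- `εψ_n`. -/
def epsPsi (n : ℕ) : ℝ → ℝ := epsF (psiN n)

/-- `J₁(x,y) = K_Ai(x,y) + (1/2)·Ai(x)·(1 − ∫_y^∞ Ai(u) du)`. -/
def J1 (x y : ℝ) : ℝ := KAi x y + (1/2) * Ai x * (1 - ∫ u in Set.Ioi y, Ai u)

/-- Scalar part of the quaternion product of Airy₁ kernels. -/
def L1 (x y : ℝ) : ℝ :=
  J1 x y * J1 y x -
    deriv (fun v => J1 x v) y * ((∫ u in x..y, J1 u x) - (1/2) * Real.sign (y - x))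

/-- `J₁ⁿ(x,y) = K_Aiⁿ(x,y) + (1/2)·ψ_{n−1}ⁿ(x)·(εψ_n)(y)`. -/
def J1N (n : ℕ) (x y : ℝ) : ℝ :=
  KAiN n x y + (1/2) * psiUp n (n - 1) x * epsPsi n y

/-- Scalar part of the quaternion product of finite-`n` Airy₁ kernels. -/
def L1N (n : ℕ) (x y : ℝ) : ℝ :=
  J1N n x y * J1N n y x -
    deriv (fun v => J1N n x v) y * ((∫ u in x..y, J1N n u x) - (1/2) * Real.sign (y - x))

/-- `ρ̂(x) = (1/π)·√(−x)` for `x < 0`, and `0` otherwise. -/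
def rhoHat (x : ℝ) : ℝ := if x < 0 then Real.sqrt (-x) / Real.pi else 0

/-- `ρ̂ⁿ(x) = (1/π)·√(−x·(1 + x/(4·n^{2/3})))` on `(−4n^{2/3}, 0)`, and `0` otherwise. -/
def rhoHatN (n : ℕ) (x : ℝ) : ℝ :=
  if -(4 * (n : ℝ) ^ ((2:ℝ)/3)) < x ∧ x < 0 then
    Real.sqrt (-x * (1 + x / (4 * (n : ℝ) ^ ((2:ℝ)/3)))) / Real.pi
  else 0

/-- `G_{a,b,c}(x,y) = |x|^{−a}·|y|^{−b}·|x−y|^{−c}`. -/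
def Gf (a b c : ℝ) (x y : ℝ) : ℝ := |x| ^ (-a) * |y| ^ (-b) * |x - y| ^ (-c)

/-- `Ĝ_{a,b,c}(x,y) = G_{a,b,c}(x,y) + G_{a,b,c}(y,x)`. -/
def Ghat (a b c : ℝ) (x y : ℝ) : ℝ := Gf a b c x y + Gf a b c y x

/-- Soft-edge one-point correlation function of the `n`-point GUE ensemble. -/
def rhoN (n : ℕ) (x : ℝ) : ℝ :=
  (deriv (psiN n) x) ^ 2 - (x ^ 2 / (4 * (n : ℝ) ^ ((2:ℝ)/3)) + x) * (psiN n x) ^ 2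

end

/-- The integrand of the contour representation. -/
noncomputable def fA (k : ℕ) (x : ℝ) (z : ℂ) : ℂ :=
  (Complex.I * z) ^ k * Complex.exp (Complex.I * (z ^ 3 / 3 + x * z))

lemma fA_differentiable (k : ℕ) (x : ℝ) : Differentiable ℂ (fA k x) := by
  unfold fA; fun_prop

lemma fA_norm (k : ℕ) (x s t : ℝ) : ‖fA k x (s + t * Complex.I)‖ =
    ‖(s + t * Complex.I : ℂ)‖ ^ k * Real.exp (t ^ 3 / 3 - s ^ 2 * t - x * t) := by
  unfold fA
  rw [norm_mul, norm_pow, norm_mul, Complex.norm_I, one_mul, Complex.norm_exp]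
  congr 2
  have : Complex.I * (((s:ℂ) + t * Complex.I) ^ 3 / 3 + x * (s + t * Complex.I)) =
      ((t ^ 3 / 3 - s ^ 2 * t - x * t : ℝ) : ℂ)
      + ((s ^ 3 / 3 - s * t ^ 2 + x * s : ℝ) : ℂ) * Complex.I := by
    push_cast
    linear_combination
      ((s:ℂ) ^ 2 * t + s * t ^ 2 * Complex.I + t ^ 3 / 3 * (Complex.I ^ 2 - 1) + x * t) * Complex.I_sq
  rw [this]
  simp only [Complex.add_re, Complex.ofReal_re, Complex.re_ofReal_mul, Complex.I_re, mul_zero, add_zero]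

lemma exists_prim (k : ℕ) (x : ℝ) :
    ∃ G : ℂ → ℂ, G 0 = 0 ∧ ∀ z, HasDerivAt G (fA k x z) z := by
  obtain ⟨G, h1, h2⟩ := (fA_differentiable k x).isExactOn_univ.with_val_at 0 0
  exact ⟨G, h1, fun z => h2 z (mem_univ _)⟩

/-- A primitive of the integrand. -/
noncomputable def GA (k : ℕ) (x : ℝ) : ℂ → ℂ := (exists_prim k x).choose

lemma GA_zero (k : ℕ) (x : ℝ) : GA k x 0 = 0 := (exists_prim k x).choose_spec.1

lemma GA_deriv (k : ℕ) (x : ℝ) (z : ℂ) : HasDerivAt (GA k x) (fA k x z) z :=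
  (exists_prim k x).choose_spec.2 z

lemma GA_line (k : ℕ) (x : ℝ) (p q : ℂ) (u : ℝ) :
    HasDerivAt (fun u : ℝ => GA k x (p + q * u)) (q * fA k x (p + q * u)) u := by
  have h1 : HasDerivAt (fun u : ℝ => p + q * (u : ℂ)) q u := by
    simpa using ((Complex.ofRealCLM.hasDerivAt (x := u)).const_mul q).const_add p
  have := (GA_deriv k x (p + q * u)).comp u h1
  rwa [mul_comm] at this

lemma fA_imag (k : ℕ) (x y : ℝ) : ∃ r : ℝ, fA k x (Complex.I * y) = r := by
  refine ⟨(-y) ^ k * Real.exp (y ^ 3 / 3 - x * y), ?_⟩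
  unfold fA
  push_cast
  congr 2
  · rw [← mul_assoc, Complex.I_mul_I]; ring
  · have h3 : Complex.I ^ 2 = -1 := Complex.I_sq
    linear_combination ((y:ℂ) ^ 3 / 3 * (Complex.I ^ 2 - 1) + x * y) * h3

lemma GA_imag (k : ℕ) (x y : ℝ) : (GA k x (Complex.I * y)).re = 0 := by
  have h : ∀ u : ℝ, HasDerivAt (fun u : ℝ => (GA k x (0 + Complex.I * u)).re) 0 u := by
    intro u
    have h1 := GA_line k x 0 Complex.I u
    have h2 := (Complex.reCLM.hasFDerivAt).comp_hasDerivAt u h1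
    obtain ⟨r, hr⟩ := fA_imag k x u
    simp only [zero_add] at h2 ⊢
    rw [hr] at h2
    have h3 : Complex.reCLM (Complex.I * (r:ℂ)) = 0 := by simp
    rw [h3] at h2
    exact h2
  have := is_const_of_deriv_eq_zero (fun u => (h u).differentiableAt) (fun u => (h u).deriv) y 0
  simpa [GA_zero] using this

lemma GA_vert (k : ℕ) (hk : k ≤ 1) (x s t : ℝ) (hs : 1 ≤ s) (hx : 3 * |x| ≤ s)
    (ht0 : 0 ≤ t) (hts : t ≤ s) :
    ‖GA k x (s + t * Complex.I) - GA k x s‖ ≤ 6 / s := by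
  set a : ℝ := s ^ 2 / 3 with ha
  have hapos : 0 < a := by positivity
  have key := image_norm_le_of_norm_deriv_right_le_deriv_boundary
    (f := fun τ : ℝ => GA k x (s + Complex.I * τ) - GA k x s)
    (f' := fun τ => Complex.I * fA k x (s + Complex.I * τ)) (a := 0) (b := s)
    (B := fun τ => 2 * s * (1 - Real.exp (-a * τ)) / a)
    (B' := fun τ => 2 * s * Real.exp (-a * τ))
    (fun τ _ => ((GA_line k x s Complex.I τ).sub_const _).continuousAt.continuousWithinAt)
    (fun τ _ => ((GA_line k x s Complex.I τ).sub_const _).hasDerivWithinAt)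
    (by simp)
    (by
      intro τ
      have h1 : HasDerivAt (fun τ : ℝ => Real.exp (-a * τ)) (Real.exp (-a * τ) * (-a)) τ := by
        simpa using ((hasDerivAt_id τ).const_mul (-a)).exp
      have h2 := (((h1.const_sub 1).const_mul (2 * s)).div_const a)
      have e : 2 * s * Real.exp (-a * τ) = 2 * s * (-(Real.exp (-a * τ) * (-a))) / a := by
        field_simp
      rw [e]; exact h2)
    (by
      rintro τ ⟨h0, h1⟩
      rw [norm_mul, Complex.norm_I, one_mul, mul_comm Complex.I, fA_norm]
      have hz : ‖(s + τ * Complex.I : ℂ)‖ ≤ 2 * s := by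
        refine (norm_add_le _ _).trans ?_
        simp only [norm_mul, Complex.norm_I, Complex.norm_real, Real.norm_eq_abs, mul_one]
        rw [abs_of_nonneg h0, abs_of_nonneg (by linarith)]; linarith
      gcongr
      · interval_cases k
        · simp; linarith
        · simpa using hz
      · have h2 : τ ^ 3 ≤ s ^ 2 * τ := by
          have : τ ^ 2 ≤ s ^ 2 := by gcongr
          nlinarith
        have h3 : -x * τ ≤ s ^ 2 / 3 * τ := by
          gcongr
          have := neg_abs_le x
          nlinarith
        rw [ha]; nlinarith)
    (x := t) ⟨ht0, hts⟩
  simp only [mul_comm Complex.I] at key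
  refine key.trans ?_
  have : 2 * s * (1 - Real.exp (-a * t)) / a ≤ 2 * s * 1 / a := by
    gcongr; linarith [Real.exp_pos (-a * t)]
  refine this.trans (le_of_eq ?_)
  rw [ha]; field_simp; norm_num

lemma affine_limit (k : ℕ) (hk : k ≤ 1) (x : ℝ) (p q : ℂ) (u0 : ℝ)
    (h0 : (p + q * u0).re = 0) (hq : 0 < q.re)
    (hInteg : IntegrableOn (fun u : ℝ => q * fA k x (p + q * u)) (Ioi u0))
    (him : ∀ᶠ u : ℝ in atTop, 0 ≤ (p + q * u).im ∧ (p + q * u).im ≤ (p + q * u).re) :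
    Tendsto (fun s : ℝ => (GA k x s).re) atTop
      (nhds (∫ u in Ioi u0, q * fA k x (p + q * u)).re) := by
  have hU : Tendsto (fun s : ℝ => (s - p.re) / q.re) atTop atTop :=
    (tendsto_atTop_add_const_right _ _ tendsto_id).atTop_div_const hq
  have h1 := intervalIntegral_tendsto_integral_Ioi u0 hInteg hU
  have h2 : ∀ U : ℝ, ∫ u in u0..U, q * fA k x (p + q * u) =
      GA k x (p + q * U) - GA k x (p + q * u0) := by
    intro U
    apply intervalIntegral.integral_eq_sub_of_hasDerivAt
    · intro u _; exact GA_line k x p q u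
    · apply Continuous.intervalIntegrable
      have := (fA_differentiable k x).continuous
      fun_prop
  simp only [h2] at h1
  have h3 := (Complex.continuous_re.tendsto _).comp h1
  have hb : (GA k x (p + q * u0)).re = 0 := by
    have : p + q * u0 = Complex.I * ((p + q * u0).im : ℝ) := by
      apply Complex.ext
      · rw [h0]; simp
      · simp
    rw [this]; exact GA_imag _ _ _
  have h4 : Tendsto (fun s : ℝ => GA k x (p + q * ((s - p.re) / q.re : ℝ)) - GA k x s) atTop
      (nhds 0) := by
    have h6 : Tendsto (fun s : ℝ => 6 / s) atTop (nhds 0) :=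
      tendsto_const_nhds.div_atTop tendsto_id
    refine squeeze_zero_norm' ?_ h6
    filter_upwards [hU.eventually him, eventually_ge_atTop 1, eventually_ge_atTop (3 * |x|)]
      with s hs hs1 hs2
    set z := p + q * ((s - p.re) / q.re : ℝ) with hz
    have hre : z.re = s := by
      simp [hz]; field_simp; ring
    have hzz : z = s + z.im * Complex.I := by
      apply Complex.ext <;> simp [hre]
    rw [hzz]
    exact GA_vert k hk x s z.im hs1 hs2 hs.1 (hre ▸ hs.2)
  have h5 := (Complex.continuous_re.tendsto _).comp h4
  have h6 := h3.sub h5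
  refine (h6.congr ?_).trans (by simp)
  intro s
  simp [hb]

lemma gauss_int (n : ℕ) {b : ℝ} (hb : 0 < b) :
    Integrable (fun s : ℝ => |s| ^ n * Real.exp (-b * s ^ 2)) := by
  have h := (integrable_rpow_mul_exp_neg_mul_sq hb (s := (n : ℝ))
    (by have : (0:ℝ) ≤ n := Nat.cast_nonneg n
        linarith)).norm
  refine h.congr (Eventually.of_forall fun s => ?_)
  simp [Real.rpow_natCast, abs_of_pos (Real.exp_pos _)]

/-- The integral over a horizontal half line. -/
noncomputable def JL (k : ℕ) (x c : ℝ) : ℂ := ∫ u in Ioi (0:ℝ), fA k x (u + c * Complex.I)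

lemma fA_cont_line (k : ℕ) (x c : ℝ) : Continuous (fun u : ℝ => fA k x (u + c * Complex.I)) := by
  have := (fA_differentiable k x).continuous
  fun_prop

lemma fA_line_le (k : ℕ) (hk : k ≤ 1) (x c u : ℝ) (hc : 0 < c) :
    ‖fA k x (u + c * Complex.I)‖ ≤
      Real.exp (c ^ 3 / 3 - x * c) *
      ((c + 1) * (|u| ^ 0 * Real.exp (-c * u ^ 2)) + |u| ^ 1 * Real.exp (-c * u ^ 2)) := by
  rw [fA_norm]
  have h1 : ‖(u + c * Complex.I : ℂ)‖ ^ k ≤ (c + 1) + |u| := by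
    interval_cases k
    · rw [pow_zero]; linarith [abs_nonneg u]
    · rw [pow_one]
      refine (norm_add_le _ _).trans ?_
      simp only [norm_mul, Complex.norm_I, Complex.norm_real, Real.norm_eq_abs, mul_one]
      rw [abs_of_pos hc]; linarith
  have h2 : Real.exp (c ^ 3 / 3 - u ^ 2 * c - x * c) =
      Real.exp (c ^ 3 / 3 - x * c) * Real.exp (-c * u ^ 2) := by
    rw [← Real.exp_add]; ring_nf
  rw [h2]
  calc _ ≤ ((c + 1) + |u|) * (Real.exp (c ^ 3 / 3 - x * c) * Real.exp (-c * u ^ 2)) := by gcongr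
    _ = _ := by ring

lemma line_int (k : ℕ) (hk : k ≤ 1) (x c : ℝ) (hc : 0 < c) :
    Integrable (fun u : ℝ => fA k x (u + c * Complex.I)) := by
  refine Integrable.mono' ((((gauss_int 0 hc).const_mul (c + 1)).add (gauss_int 1 hc)).const_mul
    (Real.exp (c ^ 3 / 3 - x * c))) (fA_cont_line k x c).aestronglyMeasurable
    (Eventually.of_forall fun u => ?_)
  exact fA_line_le k hk x c u hc

lemma tendsto_line (k : ℕ) (hk : k ≤ 1) (x c : ℝ) (hc : 0 < c) :
    Tendsto (fun s : ℝ => (GA k x s).re) atTop (nhds (JL k x c).re) := by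
  have := affine_limit k hk x (c * Complex.I) 1 0 (by simp) (by simp)
    (by
      have := (line_int k hk x c hc).integrableOn (s := Ioi 0)
      simpa [add_comm] using this)
    (by
      filter_upwards [eventually_ge_atTop c] with u hu
      simp [hu, hc.le])
  simpa [JL, add_comm] using this

lemma Ai_of_tendsto (x L : ℝ) (h : Tendsto (fun s : ℝ => (GA 0 x s).re) atTop (nhds L)) :
    Ai x = 1 / Real.pi * L := by
  unfold Ai
  congr 1
  apply Tendsto.limUnder_eq
  refine h.congr ?_
  intro b
  have h2 : ∀ t : ℝ, HasDerivAt (fun u : ℝ => (GA 0 x (0 + 1 * u)).re)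
      (Real.cos (t ^ 3 / 3 + x * t)) t := by
    intro t
    have h1 := GA_line 0 x 0 1 t
    have h2 := (Complex.reCLM.hasFDerivAt).comp_hasDerivAt t h1
    have e : Complex.reCLM (1 * fA 0 x (0 + 1 * t)) = Real.cos (t ^ 3 / 3 + x * t) := by
      have : Complex.I * ((t:ℂ) ^ 3 / 3 + x * t) = ((t ^ 3 / 3 + x * t : ℝ) : ℂ) * Complex.I := by
        push_cast; ring
      simp only [fA, Complex.reCLM_apply, pow_zero, one_mul, zero_add]
      rw [this, Complex.exp_ofReal_mul_I_re]
    rw [e] at h2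
    exact h2
  rw [intervalIntegral.integral_eq_sub_of_hasDerivAt (fun t _ => h2 t)
    (Continuous.intervalIntegrable (by fun_prop) _ _)]
  simp [GA_zero]

lemma Ai_line (x c : ℝ) (hc : 0 < c) : Ai x = 1 / Real.pi * (JL 0 x c).re :=
  Ai_of_tendsto x _ (tendsto_line 0 zero_le_one x c hc)

lemma JL_deriv (x : ℝ) : HasDerivAt (fun y => JL 0 y 1) (JL 1 x 1) x := by
  unfold JL
  refine (hasDerivAt_integral_of_dominated_loc_of_deriv_le (s := Metric.ball x 1)
    (F' := fun y u => fA 1 y (u + (1:ℝ) * Complex.I))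
    (bound := fun u => Real.exp (1 ^ 3 / 3 + (|x| + 1)) *
      ((1 + 1) * (|u| ^ 0 * Real.exp (-1 * u ^ 2)) + |u| ^ 1 * Real.exp (-1 * u ^ 2)))
    (Metric.ball_mem_nhds x one_pos)
    (Eventually.of_forall fun y => (fA_cont_line 0 y 1).aestronglyMeasurable)
    (line_int 0 zero_le_one x 1 one_pos).integrableOn
    (fA_cont_line 1 x 1).aestronglyMeasurable
    (Eventually.of_forall fun u y hy => ?_) ?_ (Eventually.of_forall fun u y hy => ?_)).2
  · refine (fA_line_le 1 le_rfl y 1 u one_pos).trans ?_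
    gcongr
    rw [Metric.mem_ball, Real.dist_eq, abs_lt] at hy
    have := neg_abs_le x
    linarith [hy.1]
  · exact ((((gauss_int 0 one_pos).const_mul (1 + 1)).add (gauss_int 1 one_pos)).const_mul
      (Real.exp (1 ^ 3 / 3 + (|x| + 1)))).integrableOn
  · simp only [fA, pow_zero, one_mul, pow_one]
    have h1 : HasDerivAt (fun v : ℝ => (v : ℂ)) 1 y := Complex.ofRealCLM.hasDerivAt
    have h2 := (((h1.mul_const ((u:ℂ) + (1:ℝ) * Complex.I)).const_add
      (((u:ℂ) + (1:ℝ) * Complex.I) ^ 3 / 3)).const_mul Complex.I).cexp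
    rw [one_mul, mul_comm (Complex.exp _)] at h2
    exact h2

lemma Ai_deriv_of_tendsto (x L : ℝ)
    (h : Tendsto (fun s : ℝ => (GA 1 x s).re) atTop (nhds L)) :
    deriv Ai x = 1 / Real.pi * L := by
  have e : Ai = fun y => 1 / Real.pi * (JL 0 y 1).re := by
    funext y; exact Ai_line y 1 one_pos
  have hL : L = (JL 1 x 1).re := tendsto_nhds_unique h (tendsto_line 1 le_rfl x 1 one_pos)
  rw [e, hL]
  exact (((Complex.reCLM.hasFDerivAt).comp_hasDerivAt x (JL_deriv x)).const_mul _).deriv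

lemma Ai_deriv_line (x c : ℝ) (hc : 0 < c) : deriv Ai x = 1 / Real.pi * (JL 1 x c).re :=
  Ai_deriv_of_tendsto x _ (tendsto_line 1 le_rfl x c hc)

/-- Gaussian moments. -/
noncomputable def KG (n : ℕ) : ℝ := ∫ v : ℝ, |v| ^ n * Real.exp (-1 * v ^ 2)

lemma KG_nonneg (n : ℕ) : 0 ≤ KG n := integral_nonneg fun v => by positivity

lemma gauss_scale (n : ℕ) {r : ℝ} (hr : 0 < r) :
    ∫ u : ℝ, |u| ^ n * Real.exp (-r ^ 2 * u ^ 2) = KG n / r ^ (n + 1) := by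
  have h := Measure.integral_comp_mul_left (fun v : ℝ => |v| ^ n * Real.exp (-1 * v ^ 2)) r
  have e : ∀ u : ℝ, |r * u| ^ n * Real.exp (-1 * (r * u) ^ 2) =
      r ^ n * (|u| ^ n * Real.exp (-r ^ 2 * u ^ 2)) := by
    intro u
    rw [abs_mul, abs_of_pos hr]; ring_nf
  simp only [e] at h
  rw [integral_const_mul, smul_eq_mul, abs_of_pos (by positivity)] at h
  change _ = r⁻¹ * KG n at h
  rw [eq_div_iff (by positivity)]
  field_simp at h
  rw [← h]; ring

lemma norm_setInt_le {f : ℝ → ℂ} {g : ℝ → ℝ} (s : Set ℝ) (hs : MeasurableSet s)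
    (hg : Integrable g) (hg0 : ∀ u, 0 ≤ g u)
    (h : ∀ u ∈ s, ‖f u‖ ≤ g u) : ‖∫ u in s, f u‖ ≤ ∫ u, g u := by
  refine (norm_integral_le_of_norm_le hg.integrableOn
    ((ae_restrict_iff' hs).2 (Eventually.of_forall h))).trans ?_
  exact setIntegral_le_integral hg (Eventually.of_forall hg0)

lemma fA0_norm_sq (a u : ℝ) : ‖fA 0 (a ^ 2) (u + a * Complex.I)‖ =
    Real.exp (-(2 / 3) * a ^ 3) * Real.exp (-a * u ^ 2) := by
  rw [fA_norm, pow_zero, one_mul, ← Real.exp_add]; ring_nf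

lemma JL0_bound (a : ℝ) (ha : 1 ≤ a) :
    ‖JL 0 (a ^ 2) a‖ ≤ Real.exp (-(2 / 3) * a ^ 3) * KG 0 := by
  have ha0 : 0 < a := by linarith
  refine (norm_setInt_le (g := fun u => Real.exp (-(2 / 3) * a ^ 3) *
    (|u| ^ 0 * Real.exp (-1 * u ^ 2))) _ measurableSet_Ioi
    ((gauss_int 0 one_pos).const_mul _) (fun u => by positivity) ?_).trans ?_
  · intro u _
    rw [fA0_norm_sq, pow_zero, one_mul]
    gcongr
  · rw [integral_const_mul]; rfl

lemma JLS_bound (a : ℝ) (ha : 1 ≤ a) :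
    ‖JL 1 (a ^ 2) a + a * JL 0 (a ^ 2) a‖ ≤ Real.exp (-(2 / 3) * a ^ 3) * (KG 1 / a) := by
  have ha0 : 0 < a := by linarith
  have e : JL 1 (a ^ 2) a + a * JL 0 (a ^ 2) a =
      ∫ u in Ioi (0:ℝ), Complex.I * u * fA 0 (a ^ 2) (u + a * Complex.I) := by
    unfold JL
    rw [← integral_const_mul, ← integral_add (line_int 1 le_rfl _ a ha0).integrableOn
      ((line_int 0 zero_le_one _ a ha0).const_mul _).integrableOn]
    congr 1
    funext u
    simp only [fA, pow_zero, pow_one, one_mul]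
    linear_combination (a * Complex.exp (Complex.I * (((u:ℂ) + a * Complex.I) ^ 3 / 3 +
      ((a ^ 2 : ℝ) : ℂ) * (u + a * Complex.I)))) * Complex.I_sq
  rw [e]
  have hsq : Real.sqrt a ^ 2 = a := Real.sq_sqrt ha0.le
  have hgi := gauss_int 1 (b := Real.sqrt a ^ 2) (by positivity)
  refine (norm_setInt_le (g := fun u => Real.exp (-(2 / 3) * a ^ 3) *
    (|u| ^ 1 * Real.exp (-Real.sqrt a ^ 2 * u ^ 2))) _ measurableSet_Ioi
    (hgi.const_mul _) (fun u => by positivity) ?_).trans ?_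
  · intro u _
    rw [norm_mul, fA0_norm_sq, norm_mul, Complex.norm_I, Complex.norm_real, Real.norm_eq_abs, hsq]
    apply le_of_eq; ring
  · rw [integral_const_mul, gauss_scale 1 (by positivity)]
    norm_num [hsq]

lemma pos_part (a : ℝ) (ha : 1 ≤ a) :
    rho (a ^ 2) ≤ (KG 1 * (KG 1 + 2 * KG 0)) * Real.exp (-(4 / 3) * a ^ 3) := by
  have ha0 : 0 < a := by linarith
  set E := Real.exp (-(2 / 3) * a ^ 3) with hE
  have hE2 : Real.exp (-(4 / 3) * a ^ 3) = E * E := by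
    rw [hE, ← Real.exp_add]; ring_nf
  have hEp : 0 < E := Real.exp_pos _
  have h0 := JL0_bound a ha
  have hS := JLS_bound a ha
  set A := (JL 0 (a ^ 2) a).re with hA
  set B := (JL 1 (a ^ 2) a).re with hB
  have hA' : |A| ≤ E * KG 0 := (Complex.abs_re_le_norm _).trans h0
  have hS' : |B + a * A| ≤ E * (KG 1 / a) := by
    refine le_trans ?_ hS
    have := Complex.abs_re_le_norm (JL 1 (a ^ 2) a + a * JL 0 (a ^ 2) a)
    rwa [Complex.add_re, Complex.re_ofReal_mul] at this
  have hK0 := KG_nonneg 0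
  have hK1 := KG_nonneg 1
  have hD : |B - a * A| ≤ a * (E * (KG 1 + 2 * KG 0)) := by
    have e : B - a * A = (B + a * A) - 2 * a * A := by ring
    rw [e]
    refine (abs_sub _ _).trans ?_
    rw [abs_mul, abs_of_pos (by positivity : 0 < 2 * a)]
    have h1 : E * (KG 1 / a) ≤ a * (E * KG 1) := by
      have : KG 1 / a ≤ a * KG 1 := by
        rw [div_le_iff₀ ha0]; nlinarith [mul_le_mul_of_nonneg_left (by nlinarith : 1 ≤ a * a) hK1]
      nlinarith
    nlinarith
  have hr : rho (a ^ 2) = (1 / Real.pi) ^ 2 * ((B + a * A) * (B - a * A)) := by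
    unfold rho
    rw [Ai_line _ a ha0, Ai_deriv_line _ a ha0]; ring
  have hpi : (1 / Real.pi) ^ 2 ≤ 1 := by
    have : 1 / Real.pi ≤ 1 := by
      rw [div_le_one Real.pi_pos]; linarith [Real.pi_gt_three]
    have h2 : 0 ≤ 1 / Real.pi := by positivity
    nlinarith
  have hprod : |(B + a * A) * (B - a * A)| ≤ E * (KG 1 / a) * (a * (E * (KG 1 + 2 * KG 0))) := by
    rw [abs_mul]; gcongr
  rw [hr, hE2]
  calc _ ≤ (1 / Real.pi) ^ 2 * |(B + a * A) * (B - a * A)| := by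
        gcongr; exact le_abs_self _
    _ ≤ 1 * |(B + a * A) * (B - a * A)| := by gcongr
    _ ≤ E * (KG 1 / a) * (a * (E * (KG 1 + 2 * KG 0))) := by rw [one_mul]; exact hprod
    _ = _ := by field_simp

lemma cexp_sub_one_le (w : ℂ) (m : ℝ) (hm : 0 ≤ m) (hw : w.re ≤ m) :
    ‖Complex.exp w - 1‖ ≤ ‖w‖ * Real.exp m := by
  have h1 : ∀ t : ℝ, HasDerivAt (fun t : ℝ => Complex.exp (t * w)) (Complex.exp (t * w) * w) t := by
    intro t
    have h : HasDerivAt (fun v : ℝ => (v : ℂ)) 1 t := Complex.ofRealCLM.hasDerivAt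
    simpa using (h.mul_const w).cexp
  have := norm_image_sub_le_of_norm_deriv_le_segment_01' (f := fun t : ℝ => Complex.exp (t * w))
    (f' := fun t => Complex.exp (t * w) * w) (C := ‖w‖ * Real.exp m)
    (fun t _ => (h1 t).hasDerivWithinAt)
    (fun t ht => by
      rw [norm_mul, mul_comm, Complex.norm_exp, Complex.re_ofReal_mul]
      gcongr
      nlinarith [ht.1, ht.2])
  simpa using this

lemma cexp_sub_sub_le (w : ℂ) (m : ℝ) (hm : 0 ≤ m) (hw : w.re ≤ m) :
    ‖Complex.exp w - 1 - w‖ ≤ ‖w‖ ^ 2 * Real.exp m := by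
  have h1 : ∀ t : ℝ, HasDerivAt (fun t : ℝ => Complex.exp (t * w) - t * w)
      (Complex.exp (t * w) * w - w) t := by
    intro t
    have h : HasDerivAt (fun v : ℝ => (v : ℂ)) 1 t := Complex.ofRealCLM.hasDerivAt
    have h3 := (h.mul_const w).cexp.sub (h.mul_const w)
    rw [one_mul] at h3
    exact h3
  have := norm_image_sub_le_of_norm_deriv_le_segment_01'
    (f := fun t : ℝ => Complex.exp (t * w) - t * w)
    (f' := fun t => Complex.exp (t * w) * w - w) (C := ‖w‖ ^ 2 * Real.exp m)
    (fun t _ => (h1 t).hasDerivWithinAt)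
    (fun t ht => by
      have e : Complex.exp (t * w) * w - w = w * (Complex.exp (t * w) - 1) := by ring
      have h2 := cexp_sub_one_le (t * w) m hm (by
        rw [Complex.re_ofReal_mul]; nlinarith [ht.1, ht.2])
      have h3 : ‖(t * w : ℂ)‖ ≤ ‖w‖ := by
        rw [norm_mul, Complex.norm_real, Real.norm_eq_abs, abs_of_nonneg ht.1]
        nlinarith [ht.2, norm_nonneg w]
      rw [e, norm_mul, sq, mul_assoc]
      gcongr
      exact h2.trans (by gcongr))
  have e : Complex.exp w - 1 - w = Complex.exp w - w - 1 := by ring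
  rw [e]
  simpa using this

/-- The eighth root of unity `e^{iπ/4}`. -/
noncomputable def om : ℂ := ⟨Real.sqrt 2 / 2, Real.sqrt 2 / 2⟩

lemma om_sq : om ^ 2 = Complex.I := by
  have h : Real.sqrt 2 * Real.sqrt 2 = 2 := Real.mul_self_sqrt (by norm_num)
  rw [sq]
  apply Complex.ext
  · simp [om]
  · simp only [om, Complex.mul_im, Complex.I_im]; linarith

lemma om_norm : ‖om‖ = 1 := by
  have h : ‖om‖ ^ 2 = 1 := by rw [← norm_pow, om_sq, Complex.norm_I]
  nlinarith [norm_nonneg om]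

lemma om_re : om.re = Real.sqrt 2 / 2 := rfl
lemma om_im : om.im = Real.sqrt 2 / 2 := rfl

/-- The integrand on the steepest descent ray. -/
noncomputable def FR (a u : ℝ) : ℂ := Complex.exp (-(a * u ^ 2 : ℝ)) * Complex.exp (-(om * u ^ 3 / 3))

lemma fA_ray (k : ℕ) (a u : ℝ) : fA k (-(a ^ 2)) (a + om * u) =
    (Complex.I * (a + om * u)) ^ k * (Complex.exp ((-(2 / 3 * a ^ 3) : ℝ) * Complex.I) * FR a u) := by
  unfold fA FR
  rw [← Complex.exp_add, ← Complex.exp_add]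
  congr 2
  push_cast
  have h1 := om_sq
  have h2 := Complex.I_sq
  linear_combination (Complex.I * (a * (u:ℂ) ^ 2 + om * u ^ 3 / 3)) * h1 + (a * (u:ℂ) ^ 2 + om * u ^ 3 / 3) * h2

lemma ray_w_norm (u : ℝ) : ‖-(om * (u:ℂ) ^ 3 / 3)‖ = |u| ^ 3 / 3 := by
  rw [norm_neg, norm_div, norm_mul, om_norm, norm_pow, Complex.norm_real, Real.norm_eq_abs]; simp

lemma ray_w_re (a u : ℝ) (hu : -(Real.sqrt 2 * a) < u) :
    (-(om * (u:ℂ) ^ 3 / 3)).re ≤ a * u ^ 2 / 3 := by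
  have h : Real.sqrt 2 * Real.sqrt 2 = 2 := Real.mul_self_sqrt (by norm_num)
  have e : -(om * (u:ℂ) ^ 3 / 3) = ((-(u ^ 3 / 3) : ℝ) : ℂ) * om := by push_cast; ring
  rw [e, Complex.re_ofReal_mul, om_re]
  have h2 : -u * Real.sqrt 2 ≤ 2 * a := by
    have := mul_le_mul_of_nonneg_left hu.le (Real.sqrt_nonneg 2)
    linear_combination this + a * h
  have h3 : -u * Real.sqrt 2 * u ^ 2 ≤ 2 * a * u ^ 2 := by gcongr
  nlinarith

lemma exp_gauss_le (a u : ℝ) (ha : 0 ≤ a) :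
    Real.exp (-(a * u ^ 2)) * Real.exp (a * u ^ 2 / 3) ≤ Real.exp (-(a / 4) * u ^ 2) := by
  rw [← Real.exp_add]
  gcongr
  nlinarith [mul_nonneg ha (sq_nonneg u)]

lemma FR_sub1 (a u : ℝ) (ha : 0 ≤ a) (hu : -(Real.sqrt 2 * a) < u) :
    ‖FR a u - (Real.exp (-(a * u ^ 2)) : ℝ)‖ ≤ |u| ^ 3 * Real.exp (-(a / 4) * u ^ 2) := by
  have h := cexp_sub_one_le _ (a * u ^ 2 / 3) (by positivity) (ray_w_re a u hu)
  have e : FR a u - (Real.exp (-(a * u ^ 2)) : ℝ) = (Real.exp (-(a * u ^ 2)) : ℝ) *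
      (Complex.exp (-(om * (u:ℂ) ^ 3 / 3)) - 1) := by
    unfold FR; push_cast; ring
  rw [e, norm_mul, Complex.norm_real, Real.norm_eq_abs, abs_of_pos (Real.exp_pos _)]
  rw [ray_w_norm] at h
  have h2 := exp_gauss_le a u ha
  calc _ ≤ Real.exp (-(a * u ^ 2)) * (|u| ^ 3 / 3 * Real.exp (a * u ^ 2 / 3)) := by gcongr
    _ = |u| ^ 3 / 3 * (Real.exp (-(a * u ^ 2)) * Real.exp (a * u ^ 2 / 3)) := by ring
    _ ≤ |u| ^ 3 * Real.exp (-(a / 4) * u ^ 2) := by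
        gcongr
        have : 0 ≤ |u| ^ 3 := by positivity
        linarith

lemma FR_sub2 (a u : ℝ) (ha : 0 ≤ a) (hu : -(Real.sqrt 2 * a) < u) :
    ‖FR a u - (Real.exp (-(a * u ^ 2)) : ℝ) * (1 - om * u ^ 3 / 3)‖ ≤
      |u| ^ 6 * Real.exp (-(a / 4) * u ^ 2) := by
  have h := cexp_sub_sub_le _ (a * u ^ 2 / 3) (by positivity) (ray_w_re a u hu)
  have e : FR a u - (Real.exp (-(a * u ^ 2)) : ℝ) * (1 - om * u ^ 3 / 3) =
      (Real.exp (-(a * u ^ 2)) : ℝ) *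
      (Complex.exp (-(om * (u:ℂ) ^ 3 / 3)) - 1 - -(om * (u:ℂ) ^ 3 / 3)) := by
    unfold FR; push_cast; ring
  rw [e, norm_mul, Complex.norm_real, Real.norm_eq_abs, abs_of_pos (Real.exp_pos _)]
  rw [ray_w_norm] at h
  have h2 := exp_gauss_le a u ha
  calc _ ≤ Real.exp (-(a * u ^ 2)) * ((|u| ^ 3 / 3) ^ 2 * Real.exp (a * u ^ 2 / 3)) := by gcongr
    _ = |u| ^ 6 / 9 * (Real.exp (-(a * u ^ 2)) * Real.exp (a * u ^ 2 / 3)) := by ring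
    _ ≤ |u| ^ 6 * Real.exp (-(a / 4) * u ^ 2) := by
        gcongr
        have : 0 ≤ |u| ^ 6 := by positivity
        linarith

lemma FR_cont (a : ℝ) : Continuous (FR a) := by unfold FR; fun_prop

lemma FR_norm (a u : ℝ) (ha : 0 ≤ a) (hu : -(Real.sqrt 2 * a) < u) :
    ‖FR a u‖ ≤ Real.exp (-(a / 4) * u ^ 2) := by
  unfold FR
  rw [norm_mul, Complex.norm_exp, Complex.norm_exp]
  refine le_trans ?_ (exp_gauss_le a u ha)
  gcongr
  · simp only [Complex.neg_re, Complex.ofReal_re]; exact le_rfl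
  · exact ray_w_re a u hu

lemma FR_int (n : ℕ) (a : ℝ) (ha : 0 < a) :
    IntegrableOn (fun u : ℝ => (u:ℂ) ^ n * FR a u) (Ioi (-(Real.sqrt 2 * a))) := by
  have hc := FR_cont a
  refine Integrable.mono' (gauss_int n (b := a / 4) (by positivity)).integrableOn
    (Continuous.aestronglyMeasurable (by fun_prop)) ?_
  refine (ae_restrict_iff' measurableSet_Ioi).2 (Eventually.of_forall fun u hu => ?_)
  rw [norm_mul, norm_pow, Complex.norm_real, Real.norm_eq_abs]
  gcongr
  exact FR_norm a u ha.le hu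

/-- Moments of the integrand on the ray. -/
noncomputable def IR (n : ℕ) (a : ℝ) : ℂ := ∫ u in Ioi (-(Real.sqrt 2 * a)), (u:ℂ) ^ n * FR a u

/-- Comparison of an integral on a half line with an integral on the line. -/
lemma compare_int {f h : ℝ → ℂ} {g : ℝ → ℝ} (s : Set ℝ) (hs : MeasurableSet s)
    (hf : IntegrableOn f s) (hh : Integrable h) (hg : Integrable g)
    (h1 : ∀ u ∈ s, ‖f u - h u‖ ≤ g u) (h2 : ∀ u ∉ s, ‖h u‖ ≤ g u) :
    ‖(∫ u in s, f u) - ∫ u, h u‖ ≤ ∫ u, g u := by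
  rw [← integral_indicator hs, ← integral_sub (hf.integrable_indicator hs) hh]
  refine norm_integral_le_of_norm_le hg (Eventually.of_forall fun u => ?_)
  by_cases hu : u ∈ s
  · simpa [hu] using h1 u hu
  · simpa [hu] using h2 u hu

lemma gauss_odd (n : ℕ) (hn : Odd n) (a : ℝ) :
    ∫ u : ℝ, u ^ n * Real.exp (-(a * u ^ 2)) = 0 := by
  have h := integral_neg_eq_self (fun u : ℝ => u ^ n * Real.exp (-(a * u ^ 2))) volume
  simp only [hn.neg_pow, even_two.neg_pow, neg_mul, integral_neg] at h
  linarith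

lemma gauss_int' (n : ℕ) {a : ℝ} (ha : 0 < a) :
    Integrable (fun u : ℝ => u ^ n * Real.exp (-(a * u ^ 2))) := by
  refine (gauss_int n ha).mono' (Continuous.aestronglyMeasurable (by fun_prop))
    (Eventually.of_forall fun u => le_of_eq ?_)
  simp [abs_of_pos (Real.exp_pos _)]

lemma gauss_intC (n : ℕ) {a : ℝ} (ha : 0 < a) :
    Integrable (fun u : ℝ => (u:ℂ) ^ n * (Real.exp (-(a * u ^ 2)) : ℝ)) := by
  have := (gauss_int' n ha).ofReal (𝕜 := ℂ)
  refine this.congr (Eventually.of_forall fun u => ?_)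
  simp

lemma gauss_intC_eq (n : ℕ) (a : ℝ) :
    ∫ u : ℝ, (u:ℂ) ^ n * (Real.exp (-(a * u ^ 2)) : ℝ) =
      ((∫ u : ℝ, u ^ n * Real.exp (-(a * u ^ 2)) : ℝ) : ℂ) := by
  rw [← integral_complex_ofReal]
  congr 1; funext u; push_cast; rfl

lemma off_bound (b u : ℝ) (hb : 1 ≤ b) (hu : u ∉ Ioi (-(Real.sqrt 2 * b ^ 2))) : 1 ≤ |u| := by
  simp only [mem_Ioi, not_lt] at hu
  have h1 : 1 ≤ Real.sqrt 2 := Real.one_le_sqrt.2 (by norm_num)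
  have h2 : 1 ≤ b ^ 2 := one_le_pow₀ hb
  rw [le_abs]; right; nlinarith

lemma exp_weak (b u : ℝ) : Real.exp (-(b ^ 2 * u ^ 2)) ≤ Real.exp (-(b / 2) ^ 2 * u ^ 2) := by
  gcongr; nlinarith [mul_nonneg (sq_nonneg b) (sq_nonneg u)]

lemma IR0_bound (b : ℝ) (hb : 1 ≤ b) :
    ‖IR 0 (b ^ 2) - (Real.sqrt Real.pi / b : ℝ)‖ ≤ 256 * KG 6 / b ^ 7 := by
  have hb0 : 0 < b := by linarith
  have ha : 0 < b ^ 2 := by positivity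
  have hInteg : Integrable (fun u : ℝ => (u:ℂ) ^ 0 * (Real.exp (-(b ^ 2 * u ^ 2)) : ℝ)
      - om / 3 * ((u:ℂ) ^ 3 * (Real.exp (-(b ^ 2 * u ^ 2)) : ℝ))) :=
    (gauss_intC 0 ha).sub ((gauss_intC 3 ha).const_mul _)
  have e1 : ∫ u : ℝ, ((u:ℂ) ^ 0 * (Real.exp (-(b ^ 2 * u ^ 2)) : ℝ)
      - om / 3 * ((u:ℂ) ^ 3 * (Real.exp (-(b ^ 2 * u ^ 2)) : ℝ))) =
      ((Real.sqrt Real.pi / b : ℝ) : ℂ) := by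
    rw [integral_sub (gauss_intC 0 ha) ((gauss_intC 3 ha).const_mul _), integral_const_mul,
      gauss_intC_eq, gauss_intC_eq, gauss_odd 3 (by decide)]
    have := integral_gaussian (b ^ 2)
    simp only [pow_zero, one_mul, ← neg_mul, this]
    rw [Real.sqrt_div Real.pi_pos.le, Real.sqrt_sq hb0.le]; simp
  rw [← e1]
  have e2 : ∀ u : ℝ, -(b ^ 2 / 4) * u ^ 2 = -(b / 2) ^ 2 * u ^ 2 := fun u => by ring
  refine (compare_int (g := fun u => 2 * (|u| ^ 6 * Real.exp (-(b / 2) ^ 2 * u ^ 2))) _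
    measurableSet_Ioi (FR_int 0 _ ha) hInteg
    ((gauss_int 6 (b := (b / 2) ^ 2) (by positivity)).const_mul 2) ?_ ?_).trans ?_
  · intro u hu
    have h := FR_sub2 (b ^ 2) u ha.le hu
    rw [e2] at h
    have e3 : (u:ℂ) ^ 0 * FR (b ^ 2) u - ((u:ℂ) ^ 0 * (Real.exp (-(b ^ 2 * u ^ 2)) : ℝ)
      - om / 3 * ((u:ℂ) ^ 3 * (Real.exp (-(b ^ 2 * u ^ 2)) : ℝ))) =
      FR (b ^ 2) u - (Real.exp (-(b ^ 2 * u ^ 2)) : ℝ) * (1 - om * u ^ 3 / 3) := by ring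
    rw [e3]
    have : 0 ≤ |u| ^ 6 * Real.exp (-(b / 2) ^ 2 * u ^ 2) := by positivity
    linarith
  · intro u hu
    have h1 := off_bound b u hb hu
    have e3 : (u:ℂ) ^ 0 * (Real.exp (-(b ^ 2 * u ^ 2)) : ℝ)
      - om / 3 * ((u:ℂ) ^ 3 * (Real.exp (-(b ^ 2 * u ^ 2)) : ℝ)) =
      (Real.exp (-(b ^ 2 * u ^ 2)) : ℝ) * (1 + -(om * u ^ 3 / 3)) := by ring
    rw [e3, norm_mul, Complex.norm_real, Real.norm_eq_abs, abs_of_pos (Real.exp_pos _)]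
    have h2 : ‖1 + -(om * (u:ℂ) ^ 3 / 3)‖ ≤ 2 * |u| ^ 6 := by
      refine (norm_add_le _ _).trans ?_
      rw [ray_w_norm, norm_one]
      have h3 : |u| ^ 3 ≤ |u| ^ 6 := pow_le_pow_right₀ h1 (by norm_num)
      have h4 : 1 ≤ |u| ^ 6 := one_le_pow₀ h1
      linarith
    calc _ ≤ Real.exp (-(b / 2) ^ 2 * u ^ 2) * (2 * |u| ^ 6) := by
          gcongr ?_ * ?_
          exact exp_weak b u
      _ = _ := by ring
  · rw [integral_const_mul, gauss_scale 6 (by positivity)]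
    apply le_of_eq; rw [div_pow]; field_simp; norm_num; ring

lemma IR1_bound (b : ℝ) (hb : 1 ≤ b) : ‖IR 1 (b ^ 2)‖ ≤ 32 * KG 4 / b ^ 5 := by
  have hb0 : 0 < b := by linarith
  have ha : 0 < b ^ 2 := by positivity
  have e1 : ∫ u : ℝ, ((u:ℂ) ^ 1 * (Real.exp (-(b ^ 2 * u ^ 2)) : ℝ)) = 0 := by
    rw [gauss_intC_eq, gauss_odd 1 (by decide)]; simp
  have e2 : ∀ u : ℝ, -(b ^ 2 / 4) * u ^ 2 = -(b / 2) ^ 2 * u ^ 2 := fun u => by ring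
  rw [← sub_zero (IR 1 (b ^ 2)), ← e1]
  refine (compare_int (g := fun u => |u| ^ 4 * Real.exp (-(b / 2) ^ 2 * u ^ 2)) _
    measurableSet_Ioi (FR_int 1 _ ha) (gauss_intC 1 ha)
    (gauss_int 4 (b := (b / 2) ^ 2) (by positivity)) ?_ ?_).trans ?_
  · intro u hu
    have h := FR_sub1 (b ^ 2) u ha.le hu
    rw [e2] at h
    rw [← mul_sub, norm_mul, norm_pow, Complex.norm_real, Real.norm_eq_abs]
    calc _ ≤ |u| ^ 1 * (|u| ^ 3 * Real.exp (-(b / 2) ^ 2 * u ^ 2)) := by gcongr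
      _ = _ := by ring
  · intro u hu
    have h1 := off_bound b u hb hu
    rw [norm_mul, Complex.norm_real, norm_pow, Complex.norm_real, Real.norm_eq_abs,
      Real.norm_eq_abs, abs_of_pos (Real.exp_pos _)]
    have h3 : |u| ^ 1 ≤ |u| ^ 4 := pow_le_pow_right₀ h1 (by norm_num)
    gcongr ?_ * ?_
    exact exp_weak b u
  · rw [gauss_scale 4 (by positivity)]
    apply le_of_eq; rw [div_pow]; field_simp; norm_num; ring

lemma ray_tendsto (k : ℕ) (hk : k ≤ 1) (a : ℝ) (ha : 0 < a)
    (hInteg : IntegrableOn (fun u : ℝ => om * fA k (-(a ^ 2)) (a + om * u)) (Ioi (-(Real.sqrt 2 * a)))) :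
    Tendsto (fun s : ℝ => (GA k (-(a ^ 2)) s).re) atTop
      (nhds (∫ u in Ioi (-(Real.sqrt 2 * a)), om * fA k (-(a ^ 2)) (a + om * u)).re) := by
  have h : Real.sqrt 2 * Real.sqrt 2 = 2 := Real.mul_self_sqrt (by norm_num)
  apply affine_limit k hk
  · simp only [Complex.add_re, Complex.re_mul_ofReal, Complex.ofReal_re, om_re]
    linear_combination (-a / 2) * h
  · rw [om_re]; positivity
  · exact hInteg
  · filter_upwards [eventually_ge_atTop 0] with u hu
    simp only [Complex.add_re, Complex.re_mul_ofReal, Complex.ofReal_re, om_re, Complex.add_im,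
      Complex.im_mul_ofReal, Complex.ofReal_im, om_im, zero_add]
    constructor
    · positivity
    · linarith

/-- The phase. -/
noncomputable def ph (a : ℝ) : ℂ := om * Complex.exp ((-(2 / 3 * a ^ 3) : ℝ) * Complex.I)

lemma ph_norm (a : ℝ) : ‖ph a‖ = 1 := by
  rw [ph, norm_mul, om_norm, Complex.norm_exp_ofReal_mul_I, one_mul]

lemma Ai_ray (a : ℝ) (ha : 0 < a) :
    Ai (-(a ^ 2)) = 1 / Real.pi * (ph a * IR 0 a).re := by
  have e : ∀ u : ℝ, om * fA 0 (-(a ^ 2)) (a + om * u) = ph a * ((u:ℂ) ^ 0 * FR a u) := by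
    intro u; rw [fA_ray, ph]; ring
  have h := ray_tendsto 0 zero_le_one a ha (by
    simp only [e]; exact (FR_int 0 a ha).const_mul _)
  simp only [e] at h
  rw [integral_const_mul] at h
  exact Ai_of_tendsto _ _ h

lemma Ai_deriv_ray (a : ℝ) (ha : 0 < a) :
    deriv Ai (-(a ^ 2)) = 1 / Real.pi *
      (Complex.I * a * (ph a * IR 0 a) + Complex.I * om * (ph a * IR 1 a)).re := by
  have e : ∀ u : ℝ, om * fA 1 (-(a ^ 2)) (a + om * u) =
      Complex.I * a * ph a * ((u:ℂ) ^ 0 * FR a u) + Complex.I * om * ph a * ((u:ℂ) ^ 1 * FR a u) := by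
    intro u; rw [fA_ray, ph]; ring
  have i0 := (FR_int 0 a ha).const_mul (Complex.I * a * ph a)
  have i1 := (FR_int 1 a ha).const_mul (Complex.I * om * ph a)
  have h := ray_tendsto 1 le_rfl a ha (by
    simp only [e]; exact i0.add i1)
  simp only [e] at h
  rw [integral_add i0 i1, integral_const_mul, integral_const_mul, mul_assoc _ (ph a),
    mul_assoc _ (ph a)] at h
  exact Ai_deriv_of_tendsto _ _ h

lemma neg_part (b : ℝ) (hb : 1 ≤ b) :
    |rho (-((b ^ 2) ^ 2)) - b ^ 2 / Real.pi| ≤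
      (256 * KG 6 * (2 * Real.sqrt Real.pi + 256 * KG 6) +
       2 * (Real.sqrt Real.pi + 256 * KG 6) * (32 * KG 4) + (32 * KG 4) ^ 2) / b ^ 4 := by
  have hb0 : 0 < b := by linarith
  have h0 := IR0_bound b hb
  have h1 := IR1_bound b hb
  have hK6 := KG_nonneg 6
  have hK4 := KG_nonneg 4
  set D := 256 * KG 6 with hD
  set D1 := 32 * KG 4 with hD1
  set σ := Real.sqrt Real.pi with hσ
  have hσ2 : σ ^ 2 = Real.pi := Real.sq_sqrt Real.pi_pos.le
  have hσ0 : 0 ≤ σ := Real.sqrt_nonneg _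
  have hDn : 0 ≤ D := by positivity
  have hD1n : 0 ≤ D1 := by positivity
  set P := ph (b ^ 2) * IR 0 (b ^ 2) with hP
  set q := (Complex.I * om * (ph (b ^ 2) * IR 1 (b ^ 2))).re with hq
  set N := ‖IR 0 (b ^ 2)‖ with hN
  have hPN : ‖P‖ = N := by rw [hP, norm_mul, ph_norm, one_mul]
  have hq1 : |q| ≤ D1 / b ^ 5 := by
    refine (Complex.abs_re_le_norm _).trans ?_
    rw [norm_mul, norm_mul, norm_mul, Complex.norm_I, om_norm, ph_norm, one_mul, one_mul, one_mul]
    exact h1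
  have hN1 : |N - σ / b| ≤ D / b ^ 7 := by
    refine le_trans ?_ h0
    have := abs_norm_sub_norm_le (IR 0 (b ^ 2)) ((σ / b : ℝ) : ℂ)
    rwa [Complex.norm_real, Real.norm_eq_abs, abs_of_nonneg (by positivity : 0 ≤ σ / b)] at this
  have hN0 : 0 ≤ N := norm_nonneg _
  have hb7 : D / b ^ 7 ≤ D / b := by
    gcongr
    exact le_self_pow₀ hb (by norm_num)
  have hN2 : N ≤ (σ + D) / b := by
    have := (abs_le.1 hN1).2
    rw [add_div]; linarith
  have hr : rho (-((b ^ 2) ^ 2)) - b ^ 2 / Real.pi = (1 / Real.pi) ^ 2 *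
      (b ^ 4 * ((N - σ / b) * (N + σ / b)) - 2 * b ^ 2 * P.im * q + q ^ 2) := by
    have hn : N ^ 2 = P.re ^ 2 + P.im ^ 2 := by
      rw [← hPN, Complex.sq_norm, Complex.normSq_apply]; ring
    unfold rho
    rw [Ai_ray _ (by positivity), Ai_deriv_ray _ (by positivity), ← hP, Complex.add_re, ← hq]
    have e : (Complex.I * ((b ^ 2 : ℝ) : ℂ) * P).re = - (b ^ 2 * P.im) := by
      rw [mul_assoc, Complex.I_mul_re, Complex.im_ofReal_mul]
    rw [e]
    have e2 : b ^ 4 * ((N - σ / b) * (N + σ / b)) = b ^ 4 * N ^ 2 - Real.pi * b ^ 2 := by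
      rw [← hσ2]; field_simp; ring
    rw [e2, hn]
    field_simp
    ring
  have hpi : (1 / Real.pi) ^ 2 ≤ 1 := by
    have : 1 / Real.pi ≤ 1 := by
      rw [div_le_one Real.pi_pos]; linarith [Real.pi_gt_three]
    have h2 : 0 ≤ 1 / Real.pi := by positivity
    nlinarith
  have t1 : |b ^ 4 * ((N - σ / b) * (N + σ / b))| ≤ D * (2 * σ + D) / b ^ 4 := by
    rw [abs_mul, abs_mul, abs_of_pos (by positivity : 0 < b ^ 4),
      abs_of_nonneg (by positivity : 0 ≤ N + σ / b)]
    calc _ ≤ b ^ 4 * (D / b ^ 7 * ((σ + D) / b + σ / b)) := by gcongr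
      _ = _ := by field_simp; ring
  have t2 : |2 * b ^ 2 * P.im * q| ≤ 2 * (σ + D) * D1 / b ^ 4 := by
    have him : |P.im| ≤ (σ + D) / b := (Complex.abs_im_le_norm P).trans (hPN ▸ hN2)
    rw [abs_mul, abs_mul, abs_of_pos (by positivity : 0 < 2 * b ^ 2)]
    calc _ ≤ 2 * b ^ 2 * ((σ + D) / b) * (D1 / b ^ 5) := by gcongr
      _ = _ := by field_simp
  have t3 : |q ^ 2| ≤ D1 ^ 2 / b ^ 4 := by
    rw [abs_pow]
    calc _ ≤ (D1 / b ^ 5) ^ 2 := by gcongr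
      _ = D1 ^ 2 / b ^ 10 := by ring
      _ ≤ _ := by
        gcongr
        norm_num
  rw [hr, abs_mul, abs_of_nonneg (by positivity : 0 ≤ (1 / Real.pi) ^ 2)]
  calc _ ≤ 1 * |b ^ 4 * ((N - σ / b) * (N + σ / b)) - 2 * b ^ 2 * P.im * q + q ^ 2| := by gcongr
    _ ≤ |b ^ 4 * ((N - σ / b) * (N + σ / b))| + |2 * b ^ 2 * P.im * q| + |q ^ 2| := by
        rw [one_mul]
        exact (abs_add_le _ _).trans (by gcongr; exact abs_sub _ _)
    _ ≤ D * (2 * σ + D) / b ^ 4 + 2 * (σ + D) * D1 / b ^ 4 + D1 ^ 2 / b ^ 4 := by gcongr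
    _ = _ := by ring

/-- asymptotics of the Airy₂ one-point correlation function `ρ`. -/
theorem rho_asymptotics :
    ∃ C : ℝ, 0 < C ∧ ∀ x : ℝ, 1 ≤ x →
      rho x ≤ C * Real.exp (-(4/3) * x ^ ((3:ℝ)/2)) ∧
      |rho (-x) - Real.sqrt x / Real.pi| ≤ C * x⁻¹ := by
  have hK0 := KG_nonneg 0
  have hK1 := KG_nonneg 1
  have hK6 := KG_nonneg 6
  have hK4 := KG_nonneg 4
  set C1 := KG 1 * (KG 1 + 2 * KG 0) with hC1
  set C2 := 256 * KG 6 * (2 * Real.sqrt Real.pi + 256 * KG 6) +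
       2 * (Real.sqrt Real.pi + 256 * KG 6) * (32 * KG 4) + (32 * KG 4) ^ 2 with hC2
  have h1 : 0 ≤ C1 := by positivity
  have h2 : 0 ≤ C2 := by positivity
  refine ⟨C1 + C2 + 1, by positivity, fun x hx => ⟨?_, ?_⟩⟩
  · have ha : 1 ≤ Real.sqrt x := Real.one_le_sqrt.2 hx
    have h := pos_part (Real.sqrt x) ha
    have e : x ^ ((3:ℝ) / 2) = Real.sqrt x ^ 3 := by
      rw [Real.sqrt_eq_rpow, ← Real.rpow_natCast, ← Real.rpow_mul (by linarith)]; norm_num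
    rw [Real.sq_sqrt (by linarith)] at h
    rw [e]
    refine h.trans ?_
    gcongr
    linarith
  · set b := Real.sqrt (Real.sqrt x) with hb
    have hb1 : 1 ≤ b := Real.one_le_sqrt.2 (Real.one_le_sqrt.2 hx)
    have h := neg_part b hb1
    have e1 : b ^ 2 = Real.sqrt x := Real.sq_sqrt (Real.sqrt_nonneg _)
    have e2 : b ^ 4 = x := by
      rw [show b ^ 4 = (b ^ 2) ^ 2 by ring, e1, Real.sq_sqrt (by linarith)]
    rw [e2, e1, Real.sq_sqrt (by linarith), ← hC2, div_eq_mul_inv C2] at h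
    refine h.trans ?_
    have : 0 ≤ x⁻¹ := by positivity
    gcongr
    linarith
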